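/- arXiv:2602.23311 — 3 statements merged into one kernel-verified Lean document; each statement's English description precedes it below -/
import Mathlib

section
/- For every unconstrained coefficient vector β ∈ ℝ^D, the transformation H has average slope one over the interval [a, b]; that is, ∫_a^b H′(x) dx = b − a, equivalently (1/(b−a)) ∫_a^b H′(x) dx = 1. -/
open MeasureTheory Finset

noncomputable section

/-- The cardinal cubic B-spline. -/
def cubicN (t : ℝ) : ℝ :=
  if 0 ≤ t ∧ t < 1 then t ^ 3 / 6
  else if 1 ≤ t ∧ t < 2 then (-3 * t ^ 3 + 12 * t ^ 2 - 12 * t + 4) / 6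
  else if 2 ≤ t ∧ t < 3 then (3 * t ^ 3 - 24 * t ^ 2 + 60 * t - 44) / 6
  else if 3 ≤ t ∧ t ≤ 4 then (4 - t) ^ 3 / 6
  else 0

/-- Equidistant knots `k_j = k0 + j·k`. -/
def knot (k0 k : ℝ) (j : ℤ) : ℝ := k0 + (j : ℝ) * k

/-- Cubic B-spline basis functions `B_j(x) = N((x − k_{j−3})/k)` for `j = 1, …, J`. -/
def Bspl (k0 k : ℝ) (j : ℕ) (x : ℝ) : ℝ := cubicN ((x - knot k0 k ((j : ℤ) - 3)) / k)

/-- The coefficients `γ_1, …, γ_J` (with `J = D + 7`, `m = D + 5`), defined from the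
unconstrained vector `β ∈ ℝ^D`. -/
def gam (D : ℕ) (k0 k : ℝ) (β : Fin D → ℝ) (j : ℕ) : ℝ :=
  if j = 1 then k0
  else if j = 2 ∨ j = 3 ∨ j = 4 ∨ j = D + 5 ∨ j = D + 6 ∨ j = D + 7 then Real.log k
  else if h : 5 ≤ j ∧ j ≤ D + 4 then
    β ⟨j - 5, by omega⟩ - Real.log ((∑ d, Real.exp (β d)) / ((D : ℝ) * k))
  else 0

/-- The transformation `H`: a cubic B-spline with coefficients
`γ_1 + ∑_{ℓ=2}^j exp(γ_ℓ)` on `[k_1, k_m]` (with `m = D + 5`), and the identity outside. -/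
def Hfun (D : ℕ) (k0 k : ℝ) (β : Fin D → ℝ) (x : ℝ) : ℝ :=
  if knot k0 k 1 ≤ x ∧ x ≤ knot k0 k ((D : ℤ) + 5) then
    ∑ j ∈ Finset.Icc 1 (D + 7),
      Bspl k0 k j x * (gam D k0 k β 1 + ∑ l ∈ Finset.Icc 2 j, Real.exp (gam D k0 k β l))
  else x


lemma hasDerivAt_pc (t : ℝ) : HasDerivAt (fun t : ℝ => max t 0 ^ 3) (3 * max t 0 ^ 2) t := by
  have h3 : ∀ t : ℝ, HasDerivAt (fun t : ℝ => t ^ 3) (3 * t ^ 2) t := fun t => by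
    simpa using hasDerivAt_pow 3 t
  rcases lt_trichotomy t 0 with h | h | h
  · rw [max_eq_right h.le]
    have : (fun t : ℝ => max t 0 ^ 3) =ᶠ[nhds t] fun _ => 0 := by
      filter_upwards [gt_mem_nhds h] with y hy
      rw [max_eq_right hy.le]; norm_num
    simpa using (hasDerivAt_const t (0:ℝ)).congr_of_eventuallyEq this
  · subst h
    have h1 : HasDerivWithinAt (fun t : ℝ => max t 0 ^ 3) 0 (Set.Ici 0) 0 := by
      have := (h3 0).hasDerivWithinAt (s := Set.Ici 0)
      norm_num at this
      refine this.congr (fun y hy => ?_) (by simp)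
      rw [max_eq_left hy]
    have h2 : HasDerivWithinAt (fun t : ℝ => max t 0 ^ 3) 0 (Set.Iic 0) 0 := by
      refine (hasDerivWithinAt_const (0:ℝ) (Set.Iic 0) (0:ℝ)).congr (fun y hy => ?_) (by simp)
      rw [max_eq_right hy]; norm_num
    have := h2.union h1
    rw [Set.Iic_union_Ici, hasDerivWithinAt_univ] at this
    simpa using this
  · rw [max_eq_left h.le]
    refine (h3 t).congr_of_eventuallyEq ?_
    filter_upwards [lt_mem_nhds h] with y hy
    rw [max_eq_left hy.le]

lemma contDiff_pc : ContDiff ℝ 1 (fun t : ℝ => max t 0 ^ 3) := by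
  rw [contDiff_one_iff_deriv]
  refine ⟨fun t => (hasDerivAt_pc t).differentiableAt, ?_⟩
  have : deriv (fun t : ℝ => max t 0 ^ 3) = fun t => 3 * max t 0 ^ 2 :=
    funext fun t => (hasDerivAt_pc t).deriv
  rw [this]; fun_prop

lemma cubicN_eq (t : ℝ) : cubicN t = (max t 0 ^ 3 - 4 * max (t - 1) 0 ^ 3
    + 6 * max (t - 2) 0 ^ 3 - 4 * max (t - 3) 0 ^ 3 + max (t - 4) 0 ^ 3) / 6 := by
  have P : ∀ c : ℝ, 0 ≤ c → max c 0 = c := fun c h => max_eq_left h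
  have Q : ∀ c : ℝ, c ≤ 0 → max c 0 = 0 := fun c h => max_eq_right h
  unfold cubicN
  split_ifs with h1 h2 h3 h4
  · rw [P t (by linarith), Q (t-1) (by linarith), Q (t-2) (by linarith), Q (t-3) (by linarith),
      Q (t-4) (by linarith)]; ring
  · rw [P t (by linarith), P (t-1) (by linarith), Q (t-2) (by linarith), Q (t-3) (by linarith),
      Q (t-4) (by linarith)]; ring
  · rw [P t (by linarith), P (t-1) (by linarith), P (t-2) (by linarith), Q (t-3) (by linarith),
      Q (t-4) (by linarith)]; ring
  · rw [P t (by linarith), P (t-1) (by linarith), P (t-2) (by linarith), P (t-3) (by linarith),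
      Q (t-4) (by linarith)]; ring
  · rcases lt_or_ge t 0 with h | h
    · rw [Q t (by linarith), Q (t-1) (by linarith), Q (t-2) (by linarith), Q (t-3) (by linarith),
        Q (t-4) (by linarith)]; ring
    · have h5 : 4 < t := by
        by_contra h6
        push Not at *
        have := h1 h
        have := h2 this
        have := h3 this
        have := h4 this
        linarith
      rw [P t (by linarith), P (t-1) (by linarith), P (t-2) (by linarith), P (t-3) (by linarith),
        P (t-4) (by linarith)]; ring

lemma contDiff_cubicN : ContDiff ℝ 1 cubicN := by
  rw [funext cubicN_eq]
  have h : ∀ c : ℝ, ContDiff ℝ 1 (fun t : ℝ => max (t - c) 0 ^ 3) := fun c =>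
    contDiff_pc.comp (contDiff_id.sub contDiff_const)
  have h0 := contDiff_pc
  have h1 := h 1
  have h2 := h 2
  have h3 := h 3
  have h4 := h 4
  exact ((((h0.sub (contDiff_const.mul h1)).add (contDiff_const.mul h2)).sub
    (contDiff_const.mul h3)).add h4).div_const 6

lemma cubicN_int (z : ℤ) (h1 : z ≠ 1) (h2 : z ≠ 2) (h3 : z ≠ 3) : cubicN (z : ℝ) = 0 := by
  rcases le_or_gt z 0 with h | h
  · have : (z : ℝ) ≤ 0 := by exact_mod_cast h
    rw [cubicN_eq, max_eq_right (by linarith), max_eq_right (by linarith),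
      max_eq_right (by linarith), max_eq_right (by linarith), max_eq_right (by linarith)]
    norm_num
  · have : (4 : ℝ) ≤ z := by
      have : 4 ≤ z := by omega
      exact_mod_cast this
    rw [cubicN_eq, max_eq_left (by linarith), max_eq_left (by linarith),
      max_eq_left (by linarith), max_eq_left (by linarith), max_eq_left (by linarith)]
    ring

lemma Bspl_knot (k0 k : ℝ) (hk : 0 < k) (j : ℕ) (i : ℤ) :
    Bspl k0 k j (knot k0 k i) = cubicN ((i - j + 3 : ℤ) : ℝ) := by
  unfold Bspl knot
  congr 1
  push_cast
  field_simp
  ring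

lemma spline_knot (n : ℕ) (k0 k : ℝ) (hk : 0 < k) (c : ℕ → ℝ) (i : ℕ) (hi : 1 ≤ i)
    (hin : i + 2 ≤ n) :
    ∑ j ∈ Finset.Icc 1 n, Bspl k0 k j (knot k0 k (i : ℤ)) * c j
      = (c i + 4 * c (i + 1) + c (i + 2)) / 6 := by
  have hs : ({i, i + 1, i + 2} : Finset ℕ) ⊆ Finset.Icc 1 n := by
    intro x hx
    simp only [Finset.mem_insert, Finset.mem_singleton] at hx
    rw [Finset.mem_Icc]; omega
  rw [← Finset.sum_subset hs]
  · rw [Finset.sum_insert (by simp), Finset.sum_insert (by simp), Finset.sum_singleton,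
      Bspl_knot _ _ hk, Bspl_knot _ _ hk, Bspl_knot _ _ hk]
    have e1 : ((i : ℤ) - (i : ℕ) + 3 : ℤ) = 3 := by omega
    have e2 : ((i : ℤ) - ((i + 1 : ℕ) : ℤ) + 3 : ℤ) = 2 := by omega
    have e3 : ((i : ℤ) - ((i + 2 : ℕ) : ℤ) + 3 : ℤ) = 1 := by omega
    rw [e1, e2, e3]
    norm_num [cubicN]
    ring
  · intro j _ hj
    simp only [Finset.mem_insert, Finset.mem_singleton, not_or] at hj
    rw [Bspl_knot _ _ hk, cubicN_int _ (by omega) (by omega) (by omega), zero_mul]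

def coefC (D : ℕ) (k0 k : ℝ) (β : Fin D → ℝ) (j : ℕ) : ℝ :=
  gam D k0 k β 1 + ∑ l ∈ Finset.Icc 2 j, Real.exp (gam D k0 k β l)

lemma coefC_succ (D : ℕ) (k0 k : ℝ) (β : Fin D → ℝ) (j : ℕ) (hj : 1 ≤ j) :
    coefC D k0 k β (j + 1) = coefC D k0 k β j + Real.exp (gam D k0 k β (j + 1)) := by
  unfold coefC
  rw [Finset.sum_Icc_succ_top (by omega)]; ring

lemma exp_gam_edge (D : ℕ) (k0 k : ℝ) (hk : 0 < k) (β : Fin D → ℝ) (j : ℕ)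
    (hj : j = 2 ∨ j = 3 ∨ j = 4 ∨ j = D + 5 ∨ j = D + 6 ∨ j = D + 7) :
    Real.exp (gam D k0 k β j) = k := by
  unfold gam
  rw [if_neg (by omega), if_pos hj, Real.exp_log hk]

lemma coefC_one (D : ℕ) (k0 k : ℝ) (β : Fin D → ℝ) : coefC D k0 k β 1 = k0 := by
  simp [coefC, gam]

lemma coefC_mid (D : ℕ) (k0 k : ℝ) (β : Fin D → ℝ) (n : ℕ) :
    coefC D k0 k β (4 + n) = coefC D k0 k β 4
      + ∑ i ∈ Finset.range n, Real.exp (gam D k0 k β (i + 5)) := by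
  induction n with
  | zero => simp
  | succ n ih =>
    rw [← add_assoc, coefC_succ _ _ _ _ _ (by omega), ih, Finset.sum_range_succ,
      show 4 + n + 1 = n + 5 by omega]
    ring

lemma sum_mid (D : ℕ) (hD : 1 ≤ D) (k0 k : ℝ) (hk : 0 < k) (β : Fin D → ℝ) :
    ∑ i ∈ Finset.range D, Real.exp (gam D k0 k β (i + 5)) = D * k := by
  have hD' : (0 : ℝ) < D := by exact_mod_cast hD
  haveI : Nonempty (Fin D) := ⟨⟨0, hD⟩⟩
  have hS : 0 < ∑ d, Real.exp (β d) :=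
    Finset.sum_pos (fun d _ => Real.exp_pos _) Finset.univ_nonempty
  rw [Finset.sum_range]
  have : ∀ i : Fin D, Real.exp (gam D k0 k β (i + 5))
      = Real.exp (β i) / ((∑ d, Real.exp (β d)) / ((D : ℝ) * k)) := by
    intro i
    have hi := i.2
    unfold gam
    rw [if_neg (by omega), if_neg (by omega), dif_pos ⟨by omega, by omega⟩, Real.exp_sub,
      Real.exp_log (by positivity)]
    simp
  rw [Finset.sum_congr rfl fun i _ => this i, ← Finset.sum_div]
  field_simp

lemma integral_H (D : ℕ) (hD : 1 ≤ D) (k0 k : ℝ) (hk : 0 < k) (β : Fin D → ℝ) :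
    ∫ x in (knot k0 k 2)..(knot k0 k ((D : ℤ) + 4)), deriv (Hfun D k0 k β) x
        = knot k0 k ((D : ℤ) + 4) - knot k0 k 2 := by
  set G : ℝ → ℝ := fun x => ∑ j ∈ Finset.Icc 1 (D + 7), Bspl k0 k j x * coefC D k0 k β j with hG
  have hGd : ContDiff ℝ 1 G := by
    refine ContDiff.sum fun j _ => ContDiff.mul ?_ contDiff_const
    exact contDiff_cubicN.comp ((contDiff_id.sub contDiff_const).div_const k)
  have hD' : (1 : ℝ) ≤ D := by exact_mod_cast hD
  have hle : knot k0 k 2 ≤ knot k0 k ((D : ℤ) + 4) := by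
    unfold knot; push_cast; nlinarith
  have h12 : knot k0 k 1 < knot k0 k 2 := by
    unfold knot; push_cast; nlinarith
  have h45 : knot k0 k ((D : ℤ) + 4) < knot k0 k ((D : ℤ) + 5) := by
    unfold knot; push_cast; nlinarith
  have hder : ∀ x ∈ Set.uIcc (knot k0 k 2) (knot k0 k ((D : ℤ) + 4)),
      deriv (Hfun D k0 k β) x = deriv G x := by
    intro x hx
    rw [Set.uIcc_of_le hle] at hx
    apply Filter.EventuallyEq.deriv_eq
    filter_upwards [lt_mem_nhds (lt_of_lt_of_le h12 hx.1),
      gt_mem_nhds (lt_of_le_of_lt hx.2 h45)] with y h1 h2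
    unfold Hfun
    rw [if_pos ⟨h1.le, h2.le⟩]
    rfl
  rw [intervalIntegral.integral_congr hder, intervalIntegral.integral_deriv_eq_sub
    (fun x _ => (hGd.differentiable (by norm_num)).differentiableAt)
    ((hGd.continuous_deriv (by norm_num)).intervalIntegrable _ _)]
  have c1 := coefC_one D k0 k β
  have c2 := coefC_succ D k0 k β 1 (by omega)
  have c3 := coefC_succ D k0 k β 2 (by omega)
  have c4 := coefC_succ D k0 k β 3 (by omega)
  have cD := coefC_mid D k0 k β D
  have c5 := coefC_succ D k0 k β (D + 4) (by omega)
  have c6 := coefC_succ D k0 k β (D + 5) (by omega)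
  rw [exp_gam_edge D k0 k hk β _ (by omega)] at c2 c3 c4 c5 c6
  rw [sum_mid D hD k0 k hk β, add_comm 4 D] at cD
  norm_num [add_assoc] at c2 c3 c4 c5 c6
  have g2 : G (knot k0 k 2) = k0 + 2 * k := by
    have := spline_knot (D + 7) k0 k hk (coefC D k0 k β) 2 (by omega) (by omega)
    norm_num at this
    rw [hG]
    simp only
    rw [this, c4, c3, c2, c1]; ring
  have g4 : G (knot k0 k ((D : ℤ) + 4)) = k0 + (D + 4) * k := by
    have := spline_knot (D + 7) k0 k hk (coefC D k0 k β) (D + 4) (by omega) (by omega)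
    norm_num [add_assoc] at this
    rw [hG]
    simp only
    rw [this, c6, c5, cD, c4, c3, c2, c1]; ring
  rw [g2, g4]
  unfold knot
  push_cast
  ring

/-- For every `β ∈ ℝ^D`, the transformation `H` has average slope one over
`[a, b]` (`a = k_2`, `b = k_{m−1}`): `∫_a^b H′(x) dx = b − a`, equivalently
`(1/(b−a)) ∫_a^b H′(x) dx = 1`. -/
theorem H_average_slope_one (D : ℕ) (hD : 1 ≤ D) (k0 k : ℝ) (hk : 0 < k)
    (β : Fin D → ℝ) :
    (∫ x in (knot k0 k 2)..(knot k0 k ((D : ℤ) + 4)), deriv (Hfun D k0 k β) x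
        = knot k0 k ((D : ℤ) + 4) - knot k0 k 2) ∧
    (1 / (knot k0 k ((D : ℤ) + 4) - knot k0 k 2)) *
        ∫ x in (knot k0 k 2)..(knot k0 k ((D : ℤ) + 4)), deriv (Hfun D k0 k β) x = 1 := by
  have h := integral_H D hD k0 k hk β
  refine ⟨h, ?_⟩
  rw [h]
  have hD' : (1 : ℝ) ≤ D := by exact_mod_cast hD
  have : 0 < knot k0 k ((D : ℤ) + 4) - knot k0 k 2 := by
    unfold knot; push_cast; nlinarith
  field_simp

end
end

section
/- For every unconstrained coefficient vector β ∈ ℝ^D, the transformation H is strictly monotonically increasing on all of ℝ. -/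
open MeasureTheory Finset

noncomputable section

def cc (D : ℕ) (k0 k : ℝ) (β : Fin D → ℝ) (j : ℕ) : ℝ :=
  gam D k0 k β 1 + ∑ l ∈ Finset.Icc 2 j, Real.exp (gam D k0 k β l)

lemma cc_succ (D : ℕ) (k0 k : ℝ) (β : Fin D → ℝ) (j : ℕ) (hj : 1 ≤ j) :
    cc D k0 k β (j + 1) = cc D k0 k β j + Real.exp (gam D k0 k β (j + 1)) := by
  unfold cc
  rw [Finset.sum_Icc_succ_top (by omega)]
  ring

lemma cN0 (u : ℝ) (h0 : 0 ≤ u) (h1 : u ≤ 1) : cubicN u = u ^ 3 / 6 := by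
  rcases h1.lt_or_eq with h | rfl
  · unfold cubicN; rw [if_pos ⟨h0, h⟩]
  · unfold cubicN; norm_num

lemma cN1 (u : ℝ) (h0 : 0 ≤ u) (h1 : u ≤ 1) :
    cubicN (u + 1) = (-3 * (u + 1) ^ 3 + 12 * (u + 1) ^ 2 - 12 * (u + 1) + 4) / 6 := by
  rcases h1.lt_or_eq with h | rfl
  · unfold cubicN
    rw [if_neg (by rintro ⟨_, _⟩; linarith), if_pos ⟨by linarith, by linarith⟩]
  · unfold cubicN; norm_num

lemma cN2 (u : ℝ) (h0 : 0 ≤ u) (h1 : u ≤ 1) :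
    cubicN (u + 2) = (3 * (u + 2) ^ 3 - 24 * (u + 2) ^ 2 + 60 * (u + 2) - 44) / 6 := by
  rcases h1.lt_or_eq with h | rfl
  · unfold cubicN
    rw [if_neg (by rintro ⟨_, _⟩; linarith), if_neg (by rintro ⟨_, _⟩; linarith),
      if_pos ⟨by linarith, by linarith⟩]
  · unfold cubicN; norm_num

lemma cN3 (u : ℝ) (h0 : 0 ≤ u) (h1 : u ≤ 1) :
    cubicN (u + 3) = (4 - (u + 3)) ^ 3 / 6 := by
  unfold cubicN
  rw [if_neg (by rintro ⟨_, _⟩; linarith), if_neg (by rintro ⟨_, _⟩; linarith),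
    if_neg (by rintro ⟨_, _⟩; linarith), if_pos ⟨by linarith, by linarith⟩]

lemma cNneg (t : ℝ) (h : t ≤ 0) : cubicN t = 0 := by
  rcases h.lt_or_eq with h | rfl
  · unfold cubicN
    rw [if_neg (by rintro ⟨_, _⟩; linarith), if_neg (by rintro ⟨_, _⟩; linarith),
      if_neg (by rintro ⟨_, _⟩; linarith), if_neg (by rintro ⟨_, _⟩; linarith)]
  · unfold cubicN; norm_num

lemma cNbig (t : ℝ) (h : 4 ≤ t) : cubicN t = 0 := by
  rcases h.lt_or_eq with h | rfl
  · unfold cubicN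
    rw [if_neg (by rintro ⟨_, _⟩; linarith), if_neg (by rintro ⟨_, _⟩; linarith),
      if_neg (by rintro ⟨_, _⟩; linarith), if_neg (by rintro ⟨_, _⟩; linarith)]
  · unfold cubicN; norm_num

lemma Bspl_eq (k0 k : ℝ) (hk : 0 < k) (i j : ℕ) (u : ℝ) :
    Bspl k0 k j (knot k0 k i + u * k) = cubicN (u + ((i : ℝ) - j + 3)) := by
  unfold Bspl knot
  congr 1
  push_cast
  field_simp
  ring

/-- local polynomial form -/
lemma Hfun_local (D : ℕ) (k0 k : ℝ) (hk : 0 < k) (β : Fin D → ℝ) (i : ℕ) (hi : 1 ≤ i)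
    (hi' : i ≤ D + 4) (u : ℝ) (h0 : 0 ≤ u) (h1 : u ≤ 1) :
    Hfun D k0 k β (knot k0 k i + u * k) =
      cc D k0 k β i + Real.exp (gam D k0 k β (i + 1)) * (1 - (1 - u) ^ 3 / 6)
        + Real.exp (gam D k0 k β (i + 2)) * ((-2 * u ^ 3 + 3 * u ^ 2 + 3 * u + 1) / 6)
        + Real.exp (gam D k0 k β (i + 3)) * (u ^ 3 / 6) := by
  have hir : (1 : ℝ) ≤ i := by exact_mod_cast hi
  have hir' : (i : ℝ) ≤ D + 4 := by exact_mod_cast hi'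
  unfold Hfun
  rw [if_pos]
  swap
  · unfold knot
    push_cast
    constructor <;> nlinarith
  have hsub : Finset.Icc i (i + 3) ⊆ Finset.Icc 1 (D + 7) := by
    intro j; simp only [Finset.mem_Icc]; omega
  rw [← Finset.sum_subset hsub]
  swap
  · intro j _ hj
    rw [Bspl_eq k0 k hk i j u]
    have : j + 1 ≤ i ∨ i + 4 ≤ j := by
      simp only [Finset.mem_Icc] at hj; omega
    rcases this with h | h
    · have h' : (j : ℝ) + 1 ≤ i := by exact_mod_cast h
      rw [cNbig _ (by linarith), zero_mul]
    · have h' : (i : ℝ) + 4 ≤ j := by exact_mod_cast h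
      rw [cNneg _ (by linarith), zero_mul]
  change ∑ j ∈ Finset.Icc i (i + 3), Bspl k0 k j (knot k0 k i + u * k) * cc D k0 k β j = _
  rw [Finset.sum_Icc_succ_top (by omega), Finset.sum_Icc_succ_top (by omega),
    Finset.sum_Icc_succ_top (by omega), Finset.Icc_self, Finset.sum_singleton]
  simp only [Bspl_eq k0 k hk]
  have e0 : u + ((i : ℝ) - i + 3) = u + 3 := by ring
  have e1 : u + ((i : ℝ) - (i + 1 : ℕ) + 3) = u + 2 := by push_cast; ring
  have e2 : u + ((i : ℝ) - (i + 1 + 1 : ℕ) + 3) = u + 1 := by push_cast; ring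
  have e3 : u + ((i : ℝ) - (i + 2 + 1 : ℕ) + 3) = u := by push_cast; ring
  rw [e0, e1, e2, e3, cN0 u h0 h1, cN1 u h0 h1, cN2 u h0 h1, cN3 u h0 h1,
    cc_succ D k0 k β (i + 2) (by omega), cc_succ D k0 k β (i + 1) (by omega),
    cc_succ D k0 k β i hi]
  ring_nf

lemma Hfun_mono_local (D : ℕ) (k0 k : ℝ) (hk : 0 < k) (β : Fin D → ℝ) (i : ℕ) (hi : 1 ≤ i)
    (hi' : i ≤ D + 4) :
    StrictMonoOn (Hfun D k0 k β) (Set.Icc (knot k0 k i) (knot k0 k ((i + 1 : ℕ) : ℤ))) := by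
  intro x hx y hy hxy
  have key : ∀ z ∈ Set.Icc (knot k0 k i) (knot k0 k ((i + 1 : ℕ) : ℤ)),
      ∃ u, 0 ≤ u ∧ u ≤ 1 ∧ z = knot k0 k i + u * k := by
    rintro z ⟨h1, h2⟩
    refine ⟨(z - knot k0 k i) / k, div_nonneg (by linarith) hk.le, ?_, by field_simp; ring⟩
    rw [div_le_one hk]
    unfold knot at *
    push_cast at *
    linarith
  obtain ⟨u, u0, u1, rfl⟩ := key x hx
  obtain ⟨v, v0, v1, rfl⟩ := key y hy
  have huv : u < v := by
    by_contra h
    push Not at h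
    nlinarith
  rw [Hfun_local D k0 k hk β i hi hi' u u0 u1, Hfun_local D k0 k hk β i hi hi' v v0 v1]
  have p1 := Real.exp_pos (gam D k0 k β (i + 1))
  have p2 := Real.exp_pos (gam D k0 k β (i + 2))
  have p3 := Real.exp_pos (gam D k0 k β (i + 3))
  have q1 : (1 - (1 - u) ^ 3 / 6) ≤ (1 - (1 - v) ^ 3 / 6) := by
    have : (1 - v) ^ 3 ≤ (1 - u) ^ 3 := pow_le_pow_left₀ (by linarith) (by linarith) 3
    linarith
  have q3 : u ^ 3 / 6 ≤ v ^ 3 / 6 := by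
    have : u ^ 3 ≤ v ^ 3 := pow_le_pow_left₀ u0 huv.le 3
    linarith
  have q2 : (-2 * u ^ 3 + 3 * u ^ 2 + 3 * u + 1) / 6 < (-2 * v ^ 3 + 3 * v ^ 2 + 3 * v + 1) / 6 := by
    have : 0 < (v - u) * (3 + 3 * (u + v) - 2 * (u ^ 2 + u * v + v ^ 2)) := by
      apply mul_pos (by linarith)
      nlinarith [mul_nonneg u0 (sub_nonneg.2 u1), mul_nonneg v0 (sub_nonneg.2 v1),
        mul_nonneg u0 (sub_nonneg.2 v1), mul_nonneg v0 (sub_nonneg.2 u1)]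
    nlinarith
  have r1 := mul_le_mul_of_nonneg_left q1 p1.le
  have r2 := mul_lt_mul_of_pos_left q2 p2
  have r3 := mul_le_mul_of_nonneg_left q3 p3.le
  linarith

lemma knot_le (k0 k : ℝ) (hk : 0 < k) (i j : ℤ) (h : i ≤ j) : knot k0 k i ≤ knot k0 k j := by
  unfold knot
  have : (i : ℝ) ≤ j := by exact_mod_cast h
  nlinarith

lemma Hfun_mono_mid (D : ℕ) (k0 k : ℝ) (hk : 0 < k) (β : Fin D → ℝ) (n : ℕ) (hn : n ≤ D + 4) :
    StrictMonoOn (Hfun D k0 k β) (Set.Icc (knot k0 k 1) (knot k0 k ((n + 1 : ℕ) : ℤ))) := by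
  induction n with
  | zero => simp
  | succ n ih =>
    have h1 : knot k0 k 1 ≤ knot k0 k ((n + 1 : ℕ) : ℤ) := knot_le _ _ hk _ _ (by omega)
    have h2 : knot k0 k ((n + 1 : ℕ) : ℤ) ≤ knot k0 k ((n + 1 + 1 : ℕ) : ℤ) :=
      knot_le _ _ hk _ _ (by omega)
    have := (ih (by omega)).union (Hfun_mono_local D k0 k hk β (n + 1) (by omega) (by omega))
      (isGreatest_Icc h1) (isLeast_Icc h2)
    rwa [Set.Icc_union_Icc_eq_Icc h1 h2] at this

lemma exp_gam_end (D : ℕ) (k0 k : ℝ) (hk : 0 < k) (β : Fin D → ℝ) (j : ℕ)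
    (h : j = 2 ∨ j = 3 ∨ j = 4 ∨ j = D + 5 ∨ j = D + 6 ∨ j = D + 7) :
    Real.exp (gam D k0 k β j) = k := by
  unfold gam
  rw [if_neg (by omega), if_pos h, Real.exp_log hk]

lemma cc_one (D : ℕ) (k0 k : ℝ) (β : Fin D → ℝ) : cc D k0 k β 1 = k0 := by
  simp [cc, gam]

lemma cc_D4 (D : ℕ) (hD : 1 ≤ D) (k0 k : ℝ) (hk : 0 < k) (β : Fin D → ℝ) :
    cc D k0 k β (D + 4) = k0 + (D + 3) * k := by
  have h4 : cc D k0 k β 4 = k0 + 3 * k := by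
    rw [cc_succ _ _ _ _ 3 (by omega), cc_succ _ _ _ _ 2 (by omega), cc_succ _ _ _ _ 1 (by omega),
      cc_one, exp_gam_end D k0 k hk β _ (by omega), exp_gam_end D k0 k hk β _ (by omega),
      exp_gam_end D k0 k hk β _ (by omega)]
    ring
  have hs : ∀ n, cc D k0 k β (n + 4) =
      cc D k0 k β 4 + ∑ i ∈ Finset.range n, Real.exp (gam D k0 k β (i + 5)) := by
    intro n
    induction n with
    | zero => simp
    | succ n ih =>
      rw [Finset.sum_range_succ, show n + 1 + 4 = (n + 4) + 1 by ring,
        cc_succ _ _ _ _ _ (by omega), ih]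
      ring
  have hDp : (0 : ℝ) < D := by exact_mod_cast hD
  have hne : Nonempty (Fin D) := ⟨⟨0, hD⟩⟩
  have hS : 0 < ∑ d, Real.exp (β d) :=
    Finset.sum_pos (fun d _ => Real.exp_pos _) Finset.univ_nonempty
  rw [hs D, h4, Finset.sum_range]
  have this : ∀ i : Fin D, Real.exp (gam D k0 k β (i + 5)) =
      Real.exp (β i) * (D * k / ∑ d, Real.exp (β d)) := by
    intro i
    have hi := i.2
    unfold gam
    rw [if_neg (by omega), if_neg (by omega), dif_pos (by omega), Real.exp_sub,
      Real.exp_log (div_pos hS (mul_pos hDp hk)), div_div_eq_mul_div, mul_div_assoc]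
    rfl
  rw [Finset.sum_congr rfl (fun i _ => this i), ← Finset.sum_mul, mul_div_cancel₀ _ hS.ne']
  ring

/-- For every `β ∈ ℝ^D`, the transformation `H` is strictly monotonically
increasing on all of `ℝ`. -/
theorem H_strictMono (D : ℕ) (hD : 1 ≤ D) (k0 k : ℝ) (hk : 0 < k)
    (β : Fin D → ℝ) :
    StrictMono (Hfun D k0 k β) := by
  have hL : Hfun D k0 k β (knot k0 k 1) = knot k0 k 1 := by
    have := Hfun_local D k0 k hk β 1 le_rfl (by omega) 0 le_rfl zero_le_one
    rw [cc_one, exp_gam_end D k0 k hk β _ (by omega), exp_gam_end D k0 k hk β _ (by omega)] at this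
    simp only [Nat.cast_one, zero_mul, add_zero] at this
    rw [this]
    unfold knot
    push_cast
    ring
  have hR : Hfun D k0 k β (knot k0 k ((D : ℤ) + 5)) = knot k0 k ((D : ℤ) + 5) := by
    have := Hfun_local D k0 k hk β (D + 4) (by omega) le_rfl 1 zero_le_one le_rfl
    have e : knot k0 k ((D + 4 : ℕ) : ℤ) + 1 * k = knot k0 k ((D : ℤ) + 5) := by
      unfold knot; push_cast; ring
    rw [cc_D4 D hD k0 k hk, exp_gam_end D k0 k hk β _ (by omega),
      exp_gam_end D k0 k hk β _ (by omega), exp_gam_end D k0 k hk β _ (by omega), e] at this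
    rw [this]
    unfold knot
    push_cast
    ring
  have hlr : knot k0 k 1 ≤ knot k0 k ((D : ℤ) + 5) := knot_le _ _ hk _ _ (by omega)
  have hA : ∀ x ≤ knot k0 k 1, Hfun D k0 k β x = x := by
    intro x hx
    rcases hx.lt_or_eq with h | rfl
    · unfold Hfun; rw [if_neg (by rintro ⟨_, _⟩; linarith)]
    · exact hL
  have hB : ∀ x, knot k0 k ((D : ℤ) + 5) ≤ x → Hfun D k0 k β x = x := by
    intro x hx
    rcases hx.lt_or_eq with h | rfl
    · unfold Hfun; rw [if_neg (by rintro ⟨_, _⟩; linarith)]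
    · exact hR
  have mA : StrictMonoOn (Hfun D k0 k β) (Set.Iic (knot k0 k 1)) := by
    intro x hx y hy h
    rwa [hA x hx, hA y hy]
  have mB : StrictMonoOn (Hfun D k0 k β) (Set.Ici (knot k0 k ((D : ℤ) + 5))) := by
    intro x hx y hy h
    rwa [hB x hx, hB y hy]
  have mM : StrictMonoOn (Hfun D k0 k β) (Set.Icc (knot k0 k 1) (knot k0 k ((D : ℤ) + 5))) := by
    have := Hfun_mono_mid D k0 k hk β (D + 4) le_rfl
    have e : (((D + 4 + 1 : ℕ)) : ℤ) = (D : ℤ) + 5 := by push_cast; ring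
    rwa [e] at this
  have m1 := mA.union mM isGreatest_Iic (isLeast_Icc hlr)
  rw [Set.Iic_union_Icc_eq_Iic hlr] at m1
  have m2 := m1.union mB isGreatest_Iic isLeast_Ici
  rw [Set.Iic_union_Ici] at m2
  exact strictMonoOn_univ.1 m2

end
end

section
/- (Reduction to base model.) Suppose all entries of β are equal, i.e. β = β₀·(1, …, 1) for some β₀ ∈ ℝ. Let F : ℝ → ℝ be a continuous, strictly increasing function with range (0,1) (a continuous cumulative distribution function), and let G : ℝ → ℝ be the function satisfying Φ(G(t)) = F(t) for all t ∈ ℝ. If y is a real-valued random variable such that the distribution of (H ∘ G)(y) is the standard normal distribution N(0,1), then ℙ(y ≤ t) = F(t) for all t ∈ ℝ. -/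
open MeasureTheory Finset

noncomputable section

/-- The standard normal CDF `Φ`. -/
def stdNormalCDF (t : ℝ) : ℝ := ((ProbabilityTheory.gaussianReal 0 1) (Set.Iic t)).toReal

theorem cubicN_0 (s : ℝ) (h0 : 0 ≤ s) (h1 : s ≤ 1) : cubicN s = s ^ 3 / 6 := by
  unfold cubicN
  rcases h1.lt_or_eq with h | h
  · rw [if_pos ⟨h0, h⟩]
  · subst h; norm_num

theorem cubicN_1 (s : ℝ) (h0 : 0 ≤ s) (h1 : s ≤ 1) :
    cubicN (s + 1) = (-3 * (s+1) ^ 3 + 12 * (s+1) ^ 2 - 12 * (s+1) + 4) / 6 := by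
  unfold cubicN
  rcases h1.lt_or_eq with h | h
  · rw [if_neg (fun h => by linarith [h.2]), if_pos ⟨by linarith, by linarith⟩]
  · subst h; norm_num

theorem cubicN_2 (s : ℝ) (h0 : 0 ≤ s) (h1 : s ≤ 1) :
    cubicN (s + 2) = (3 * (s+2) ^ 3 - 24 * (s+2) ^ 2 + 60 * (s+2) - 44) / 6 := by
  unfold cubicN
  rcases h1.lt_or_eq with h | h
  · rw [if_neg (fun h => by linarith [h.2]), if_neg (fun h => by linarith [h.2]),
      if_pos ⟨by linarith, by linarith⟩]
  · subst h; norm_num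

theorem cubicN_3 (s : ℝ) (h0 : 0 ≤ s) (h1 : s ≤ 1) :
    cubicN (s + 3) = (4 - (s + 3)) ^ 3 / 6 := by
  unfold cubicN
  rw [if_neg (fun h => by linarith [h.2]), if_neg (fun h => by linarith [h.2]),
      if_neg (fun h => by linarith [h.2]), if_pos ⟨by linarith, by linarith⟩]

theorem cubicN_neg (s : ℝ) (h0 : s ≤ 0) : cubicN s = 0 := by
  rcases h0.lt_or_eq with h | h
  · unfold cubicN
    rw [if_neg (fun h => by linarith [h.1]), if_neg (fun h => by linarith [h.1]),
      if_neg (fun h => by linarith [h.1]), if_neg (fun h => by linarith [h.1])]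
  · subst h; norm_num [cubicN]

theorem cubicN_big (s : ℝ) (h0 : 4 ≤ s) : cubicN s = 0 := by
  rcases h0.lt_or_eq with h | h
  · unfold cubicN
    rw [if_neg (fun h => by linarith [h.2]), if_neg (fun h => by linarith [h.2]),
      if_neg (fun h => by linarith [h.2]), if_neg (fun h => by linarith [h.2])]
  · subst h; norm_num [cubicN]

theorem exp_gam (D : ℕ) (hD : 1 ≤ D) (k0 k : ℝ) (hk : 0 < k) (β0 : ℝ) (l : ℕ)
    (h2 : 2 ≤ l) (hl : l ≤ D + 7) : Real.exp (gam D k0 k (fun _ => β0) l) = k := by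
  have hD' : (0 : ℝ) < D := by exact_mod_cast hD
  unfold gam
  rw [if_neg (by omega)]
  split_ifs with h h'
  · exact Real.exp_log hk
  · have : (∑ _d : Fin D, Real.exp β0) / ((D : ℝ) * k) = Real.exp β0 / k := by
      simp
      field_simp
    rw [this, Real.exp_sub, Real.exp_log (by positivity)]
    field_simp
  · omega

theorem coef_eq (D : ℕ) (hD : 1 ≤ D) (k0 k : ℝ) (hk : 0 < k) (β0 : ℝ) (j : ℕ)
    (h1 : 1 ≤ j) (hl : j ≤ D + 7) :
    gam D k0 k (fun _ => β0) 1 + ∑ l ∈ Finset.Icc 2 j, Real.exp (gam D k0 k (fun _ => β0) l)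
      = k0 + ((j : ℝ) - 1) * k := by
  rw [Finset.sum_congr rfl (g := fun _ => k) (fun l hl' => by
    rw [Finset.mem_Icc] at hl'
    exact exp_gam D hD k0 k hk β0 l hl'.1 (by omega))]
  have : gam D k0 k (fun _ => β0) 1 = k0 := by simp [gam]
  rw [this]
  have h3 : j + 1 - 2 = j - 1 := by omega
  simp [h3, Nat.cast_sub h1]

theorem Hfun_id (D : ℕ) (hD : 1 ≤ D) (k0 k : ℝ) (hk : 0 < k) (β0 : ℝ) (x : ℝ) :
    Hfun D k0 k (fun _ => β0) x = x := by
  unfold Hfun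
  split_ifs with hx
  swap
  · rfl
  obtain ⟨u, rfl⟩ : ∃ u, x = k0 + u * k := ⟨(x - k0) / k, by field_simp; ring⟩
  simp only [knot] at hx
  push_cast at hx
  have hu1 : 1 ≤ u := le_of_mul_le_mul_right (by linarith [hx.1]) hk
  have hu2 : u ≤ D + 5 := le_of_mul_le_mul_right (by linarith [hx.2]) hk
  have hB : ∀ j : ℕ, Bspl k0 k j (k0 + u * k) = cubicN (u - j + 3) := by
    intro j
    simp only [Bspl, knot]
    push_cast
    congr 1
    field_simp
    ring
  obtain ⟨i, hi1, hi2, hl, hr⟩ : ∃ i : ℕ, 1 ≤ i ∧ i ≤ D + 4 ∧ (i : ℝ) ≤ u ∧ u ≤ i + 1 := by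
    rcases hu2.lt_or_eq with h | h
    · refine ⟨⌊u⌋₊, Nat.le_floor (by simpa using hu1), ?_, Nat.floor_le (by linarith),
        (Nat.lt_floor_add_one u).le⟩
      have : ⌊u⌋₊ < D + 5 := (Nat.floor_lt (by linarith)).2 (by push_cast; exact h)
      omega
    · exact ⟨D + 4, by omega, le_rfl, by push_cast; linarith, by push_cast; linarith⟩
  rw [Finset.sum_congr rfl (g := fun j : ℕ => cubicN (u - j + 3) * (k0 + ((j : ℝ) - 1) * k))
    (fun j hj => by
      rw [Finset.mem_Icc] at hj
      rw [hB, coef_eq D hD k0 k hk β0 j hj.1 hj.2])]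
  have hsub : ({i, i + 1, i + 2, i + 3} : Finset ℕ) ⊆ Finset.Icc 1 (D + 7) := by
    intro j hj
    simp only [Finset.mem_insert, Finset.mem_singleton] at hj
    rw [Finset.mem_Icc]
    omega
  rw [← Finset.sum_subset hsub]
  · rw [Finset.sum_insert (by simp), Finset.sum_insert (by simp), Finset.sum_insert (by simp),
      Finset.sum_singleton]
    obtain ⟨s, rfl⟩ : ∃ s, u = i + s := ⟨u - i, by ring⟩
    have s0 : 0 ≤ s := by linarith
    have s1 : s ≤ 1 := by linarith
    push_cast
    rw [show (i : ℝ) + s - i + 3 = s + 3 by ring, show (i : ℝ) + s - (i + 1) + 3 = s + 2 by ring,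
      show (i : ℝ) + s - (i + 2) + 3 = s + 1 by ring, show (i : ℝ) + s - (i + 3) + 3 = s by ring,
      cubicN_0 s s0 s1, cubicN_1 s s0 s1, cubicN_2 s s0 s1, cubicN_3 s s0 s1]
    ring
  · intro j _ hj
    simp only [Finset.mem_insert, Finset.mem_singleton] at hj
    rcases lt_or_ge j i with h | h
    · have : (j : ℝ) + 1 ≤ i := by exact_mod_cast h
      rw [cubicN_big _ (by linarith), zero_mul]
    · have : (i : ℝ) + 4 ≤ j := by exact_mod_cast (by omega : i + 4 ≤ j)
      rw [cubicN_neg _ (by linarith), zero_mul]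

/-- Reduction to base model: Suppose all entries of `β` are equal,
`β = β₀·(1, …, 1)`. Let `F : ℝ → ℝ` be a continuous, strictly increasing function with
range `(0,1)` (a continuous CDF), and let `G : ℝ → ℝ` satisfy `Φ(G(t)) = F(t)` for all
`t`. If `y` is a real-valued random variable such that the distribution of `(H ∘ G)(y)`
is `N(0,1)`, then `ℙ(y ≤ t) = F(t)` for all `t ∈ ℝ`. -/
theorem reduction_to_base_model (D : ℕ) (hD : 1 ≤ D) (k0 k : ℝ) (hk : 0 < k)
    (β0 : ℝ)
    (F G : ℝ → ℝ) (hFcont : Continuous F) (hFmono : StrictMono F)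
    (hFrange : Set.range F = Set.Ioo 0 1)
    (hG : ∀ t, stdNormalCDF (G t) = F t)
    {Ω : Type*} [MeasurableSpace Ω] (P : MeasureTheory.Measure Ω)
    [MeasureTheory.IsProbabilityMeasure P]
    (y : Ω → ℝ) (hy : Measurable y)
    (hdist : MeasureTheory.Measure.map (fun ω => Hfun D k0 k (fun _ => β0) (G (y ω))) P
      = ProbabilityTheory.gaussianReal 0 1) :
    ∀ t : ℝ, (P {ω | y ω ≤ t}).toReal = F t := by
  intro t
  simp only [Hfun_id D hD k0 k hk β0] at hdist
  have hae : AEMeasurable (fun ω => G (y ω)) P := by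
    by_contra h
    rw [Measure.map_of_not_aemeasurable h] at hdist
    exact (IsProbabilityMeasure.ne_zero (ProbabilityTheory.gaussianReal 0 1)) hdist.symm
  have hmono : Monotone stdNormalCDF := by
    intro a b hab
    exact ENNReal.toReal_mono (measure_ne_top _ _) (measure_mono (Set.Iic_subset_Iic.2 hab))
  have hiff : ∀ s, G s ≤ G t ↔ s ≤ t := by
    intro s
    constructor
    · intro h
      have := hmono h
      rw [hG, hG] at this
      exact hFmono.le_iff_le.1 this
    · intro h
      by_contra h'
      have := hmono (not_le.1 h').le
      rw [hG, hG] at this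
      have := hFmono.le_iff_le.1 this
      exact h' (by rw [le_antisymm h this])
  rw [← hG, stdNormalCDF, ← hdist, Measure.map_apply_of_aemeasurable hae measurableSet_Iic]
  congr 2
  ext ω
  simp [hiff]

end
end
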